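/- arXiv:2101.06251 — 2 statements merged into one kernel-verified Lean document; each statement's English description precedes it below -/
import Mathlib

section
/- Let V(ρ, τ) be the two-field potential with parameters r, h, t, f₁, f₃, f₅. Then, evaluating at (ρ, τ) = (1, 1): 2·[ 3·τ∂_τV + ∂_τ̂²V ] = −8·V(1,1) + t/12 (i.e. −2·𝓡₄ + t/12 with 𝓡₄ = 4·V(1,1)). Consequently (condition C2), if ∂_ρV = ∂_τV = 0 at (1,1) and −8·V(1,1) + t/12 < 0, then ∂_τ̂²V|_{(1,1)} < 0, so the canonical Hessian at (1,1) has a negative eigenvalue (a tachyon). -/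
/-!
The potential is a sum of six monomials `cᵢ ρ^αᵢ τ^βᵢ`, on which `τ∂_τ` acts as multiplication by
`βᵢ`. At `(1,1)` both sides of the identity are therefore linear combinations of the `cᵢ`, and they
agree because `3β + β²/2 + 4` vanishes for `β = -2` and `β = -4`, while for `β = -3` (the source
term) it equals `-1/2`.

In canonical coordinates the monomials become `cᵢ exp(αᵢ √(2/3) x) exp(βᵢ y/√2)`. Hence the mixed
second derivatives of `W` at the origin agree and `∂ᵧᵧW = ∂_τ̂²V`. At an extremum the identity makes
this diagonal entry negative, and a real symmetric `2 × 2` matrix with a negative diagonal entry has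
a negative eigenvalue (`exists_neg_eigenvalue`).
-/

/-- The two-field scalar potential `V(ρ, τ)` (with `M_p = 1`), with parameters
`r = 𝓡₆`, `h = |H|²`, `t = g_s T₁₀`, `f₁, f₃, f₅ = g_s²|F_q|²`:
`2·V = −τ⁻²·(ρ⁻¹·r − (1/2)·ρ⁻³·h) − τ⁻³·ρ^(−1/2)·t/6 + (1/2)·τ⁻⁴·(ρ²·f₁ + f₃ + ρ⁻²·f₅)`. -/
noncomputable def V2 (r h t f1 f3 f5 : ℝ) (ρ τ : ℝ) : ℝ :=
  (1/2) * (-(τ ^ (-2 : ℝ)) * (ρ ^ (-1 : ℝ) * r - (1/2) * ρ ^ (-3 : ℝ) * h)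
    - τ ^ (-3 : ℝ) * ρ ^ (-(1/2) : ℝ) * t / 6
    + (1/2) * τ ^ (-4 : ℝ) * (ρ ^ (2 : ℝ) * f1 + f3 + ρ ^ (-2 : ℝ) * f5))

/-- The operator `ρ ∂_ρ` acting on functions of `(ρ, τ)`. -/
noncomputable def rDr (F : ℝ → ℝ → ℝ) (ρ τ : ℝ) : ℝ :=
  ρ * deriv (fun x => F x τ) ρ

/-- The operator `τ ∂_τ` acting on functions of `(ρ, τ)`. -/
noncomputable def tDt (F : ℝ → ℝ → ℝ) (ρ τ : ℝ) : ℝ :=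
  τ * deriv (fun y => F ρ y) τ

/-- `W(x, y) = V(exp(√(2/3)·x), exp(y/√2))`: the potential in canonical field
coordinates; its Hessian at the origin is the canonical Hessian `M̂` at `(1,1)`. -/
noncomputable def W2 (r h t f1 f3 f5 : ℝ) (x y : ℝ) : ℝ :=
  V2 r h t f1 f3 f5 (Real.exp (Real.sqrt (2/3) * x)) (Real.exp (y / Real.sqrt 2))

/-- `∂ₓₓW` at the origin: the `ρ̂ρ̂` entry of the canonical Hessian `M̂` at `(1,1)`. -/
noncomputable def Wxx (r h t f1 f3 f5 : ℝ) : ℝ :=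
  deriv (fun x => deriv (fun x' => W2 r h t f1 f3 f5 x' 0) x) 0

/-- `∂ᵧ∂ₓW` at the origin: the `ρ̂τ̂` entry of the canonical Hessian `M̂` at `(1,1)`. -/
noncomputable def Wxy (r h t f1 f3 f5 : ℝ) : ℝ :=
  deriv (fun y => deriv (fun x' => W2 r h t f1 f3 f5 x' y) 0) 0

/-- `∂ₓ∂ᵧW` at the origin: the `τ̂ρ̂` entry of the canonical Hessian `M̂` at `(1,1)`. -/
noncomputable def Wyx (r h t f1 f3 f5 : ℝ) : ℝ :=
  deriv (fun x => deriv (fun y' => W2 r h t f1 f3 f5 x y') 0) 0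

/-- `∂ᵧᵧW` at the origin: the `τ̂τ̂` entry of the canonical Hessian `M̂` at `(1,1)`. -/
noncomputable def Wyy (r h t f1 f3 f5 : ℝ) : ℝ :=
  deriv (fun y => deriv (fun y' => W2 r h t f1 f3 f5 0 y') y) 0

/-- Coefficients of the six monomials of the potential, in the order
`r, h, t, f₁, f₃, f₅`. -/
noncomputable def monoCoeff (r h t f1 f3 f5 : ℝ) : Fin 6 → ℝ :=
  ![-r / 2, h / 4, -t / 12, f1 / 4, f3 / 4, f5 / 4]

/-- Exponents of `ρ` in the six monomials of the potential. -/
noncomputable def rhoExp : Fin 6 → ℝ := ![-1, -3, -(1/2), 2, 0, -2]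

/-- Exponents of `τ` in the six monomials of the potential. -/
noncomputable def tauExp : Fin 6 → ℝ := ![-2, -2, -3, -4, -4, -4]

lemma V2_eq_sum (r h t f1 f3 f5 ρ τ : ℝ) :
    V2 r h t f1 f3 f5 ρ τ
      = ∑ i, monoCoeff r h t f1 f3 f5 i * ρ ^ rhoExp i * τ ^ tauExp i := by
  simp only [V2, monoCoeff, rhoExp, tauExp, Fin.sum_univ_six, Matrix.cons_val, Real.rpow_zero]
  ring

lemma W2_eq_sum (r h t f1 f3 f5 x y : ℝ) :
    W2 r h t f1 f3 f5 x y
      = ∑ i, monoCoeff r h t f1 f3 f5 i * Real.exp (rhoExp i * √(2/3) * x)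
          * Real.exp (tauExp i / √2 * y) := by
  rw [W2, V2_eq_sum]
  refine Finset.sum_congr rfl fun i _ => ?_
  rw [← Real.exp_mul, ← Real.exp_mul]
  ring_nf

lemma deriv_sum_rpow (a b : Fin 6 → ℝ) {τ : ℝ} (hτ : 0 < τ) :
    τ * deriv (fun y : ℝ => ∑ i, a i * y ^ b i) τ = ∑ i, a i * b i * τ ^ b i := by
  have hd : HasDerivAt (fun y : ℝ => ∑ i, a i * y ^ b i)
      (∑ i, a i * (b i * τ ^ (b i - 1))) τ :=
    HasDerivAt.fun_sum fun i _ =>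
      (Real.hasDerivAt_rpow_const (Or.inl hτ.ne')).const_mul (a i)
  rw [hd.deriv, Finset.mul_sum]
  refine Finset.sum_congr rfl fun i _ => ?_
  rw [Real.rpow_sub_one hτ.ne']
  field_simp

lemma deriv_sum_exp (a b : Fin 6 → ℝ) (x : ℝ) :
    deriv (fun y : ℝ => ∑ i, a i * Real.exp (b i * y)) x
      = ∑ i, a i * b i * Real.exp (b i * x) := by
  have hd : HasDerivAt (fun y : ℝ => ∑ i, a i * Real.exp (b i * y))
      (∑ i, a i * (Real.exp (b i * x) * (b i * 1))) x :=
    HasDerivAt.fun_sum fun i _ =>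
      (((hasDerivAt_id' x).const_mul (b i)).exp).const_mul (a i)
  rw [hd.deriv]
  exact Finset.sum_congr rfl fun i _ => by ring

lemma tDt_V2 (r h t f1 f3 f5 : ℝ) {τ : ℝ} (hτ : 0 < τ) :
    tDt (V2 r h t f1 f3 f5) 1 τ
      = ∑ i, monoCoeff r h t f1 f3 f5 i * tauExp i * τ ^ tauExp i := by
  simp only [tDt, V2_eq_sum, Real.one_rpow, mul_one]
  exact deriv_sum_rpow _ _ hτ

lemma tDt_tDt_V2 (r h t f1 f3 f5 : ℝ) :
    tDt (tDt (V2 r h t f1 f3 f5)) 1 1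
      = ∑ i, monoCoeff r h t f1 f3 f5 i * tauExp i * tauExp i := by
  -- The monomial formula for the inner `τ∂_τ` holds only for `τ > 0`, which is a neighbourhood of 1.
  have hev : (fun y => tDt (V2 r h t f1 f3 f5) 1 y) =ᶠ[nhds 1]
      fun y => ∑ i, monoCoeff r h t f1 f3 f5 i * tauExp i * y ^ tauExp i := by
    filter_upwards [lt_mem_nhds (zero_lt_one' ℝ)] with y hy
    exact tDt_V2 r h t f1 f3 f5 hy
  rw [tDt, hev.deriv_eq, deriv_sum_rpow _ _ one_pos]
  simp only [Real.one_rpow, mul_one]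

lemma Wyy_eq (r h t f1 f3 f5 : ℝ) :
    Wyy r h t f1 f3 f5 = (1/2) * tDt (tDt (V2 r h t f1 f3 f5)) 1 1 := by
  simp only [Wyy, W2_eq_sum, deriv_sum_exp, tDt_tDt_V2, mul_zero, Real.exp_zero, mul_one,
    Finset.mul_sum]
  refine Finset.sum_congr rfl fun i _ => ?_
  have h2 : √(2:ℝ) ^ 2 = 2 := Real.sq_sqrt (by norm_num)
  field_simp
  rw [h2]

lemma Wxy_eq_Wyx (r h t f1 f3 f5 : ℝ) : Wxy r h t f1 f3 f5 = Wyx r h t f1 f3 f5 := by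
  have hx : ∀ y, deriv (fun x => W2 r h t f1 f3 f5 x y) 0
      = ∑ i, monoCoeff r h t f1 f3 f5 i * (rhoExp i * √(2/3)) * Real.exp (tauExp i / √2 * y) := by
    intro y
    simp only [W2_eq_sum, mul_right_comm _ (Real.exp _) (Real.exp _)]
    rw [deriv_sum_exp]
    refine Finset.sum_congr rfl fun i _ => ?_
    rw [mul_zero, Real.exp_zero]
    ring
  have hy : ∀ x, deriv (fun y => W2 r h t f1 f3 f5 x y) 0
      = ∑ i, monoCoeff r h t f1 f3 f5 i * (tauExp i / √2) * Real.exp (rhoExp i * √(2/3) * x) := by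
    intro x
    simp only [W2_eq_sum]
    rw [deriv_sum_exp]
    refine Finset.sum_congr rfl fun i _ => ?_
    rw [mul_zero, Real.exp_zero]
    ring
  simp only [Wxy, Wyx, hx, hy]
  rw [deriv_sum_exp, deriv_sum_exp]
  refine Finset.sum_congr rfl fun i _ => ?_
  rw [mul_zero, mul_zero]
  ring

/-- The eigenvalue is the smaller root of the characteristic polynomial, which is at most `d`. -/
lemma exists_neg_eigenvalue (a b d : ℝ) (hd : d < 0) :
    ∃ μ : ℝ, μ < 0 ∧ ∃ v : Fin 2 → ℝ, v ≠ 0 ∧ (!![a, b; b, d]).mulVec v = μ • v := by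
  by_cases hb : b = 0
  · refine ⟨d, hd, ![0, 1], fun hv => by simpa using congrFun hv 1, ?_⟩
    ext i
    fin_cases i <;> simp [hb]
  · have hs : √((a - d) ^ 2 + 4 * b ^ 2) ^ 2 = (a - d) ^ 2 + 4 * b ^ 2 :=
      Real.sq_sqrt (by positivity)
    have hle : a - d ≤ √((a - d) ^ 2 + 4 * b ^ 2) :=
      Real.le_sqrt_of_sq_le (by nlinarith [sq_nonneg b])
    set s := √((a - d) ^ 2 + 4 * b ^ 2)
    refine ⟨(a + d - s) / 2, by linarith, ![b, (a + d - s) / 2 - a],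
      fun hv => hb (by simpa using congrFun hv 0), ?_⟩
    ext i
    fin_cases i
    · simp [Matrix.mulVec, dotProduct, Fin.sum_univ_two]
      ring
    · simp [Matrix.mulVec, dotProduct, Fin.sum_univ_two]
      linarith

/-- At `(ρ, τ) = (1, 1)`:
`2·[ 3·τ∂_τV + ∂_τ̂²V ] = −8·V(1,1) + t/12` (i.e. `−2·𝓡₄ + t/12` with `𝓡₄ = 4·V(1,1)`).
Consequently (condition C2), at an extremum with `−8·V(1,1) + t/12 < 0`, one has
`∂_τ̂²V|₍₁,₁₎ < 0`, so the canonical Hessian at `(1,1)` has a negative eigenvalue. -/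
theorem two_field_C2_tachyon (r h t f1 f3 f5 : ℝ) :
    (2 * (3 * tDt (V2 r h t f1 f3 f5) 1 1 + (1/2) * tDt (tDt (V2 r h t f1 f3 f5)) 1 1)
      = -8 * V2 r h t f1 f3 f5 1 1 + t / 12) ∧
    ((deriv (fun x => V2 r h t f1 f3 f5 x 1) 1 = 0 ∧
        deriv (fun y => V2 r h t f1 f3 f5 1 y) 1 = 0) →
      -8 * V2 r h t f1 f3 f5 1 1 + t / 12 < 0 →
      ((1/2) * tDt (tDt (V2 r h t f1 f3 f5)) 1 1 < 0 ∧
        ∃ μ : ℝ, μ < 0 ∧ ∃ v : Fin 2 → ℝ, v ≠ 0 ∧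
          (!![Wxx r h t f1 f3 f5, Wxy r h t f1 f3 f5;
              Wyx r h t f1 f3 f5, Wyy r h t f1 f3 f5]).mulVec v = μ • v)) := by
  have key : 2 * (3 * tDt (V2 r h t f1 f3 f5) 1 1
      + (1/2) * tDt (tDt (V2 r h t f1 f3 f5)) 1 1)
      = -8 * V2 r h t f1 f3 f5 1 1 + t / 12 := by
    rw [tDt_tDt_V2, tDt_V2 _ _ _ _ _ _ one_pos, V2_eq_sum]
    simp only [Real.one_rpow, mul_one, monoCoeff, tauExp, Fin.sum_univ_six, Matrix.cons_val]
    ring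
  refine ⟨key, fun ⟨_, hτ⟩ hneg => ?_⟩
  have h0 : tDt (V2 r h t f1 f3 f5) 1 1 = 0 := by rw [tDt, hτ, mul_zero]
  have hyy : (1/2) * tDt (tDt (V2 r h t f1 f3 f5)) 1 1 < 0 := by
    rw [h0] at key
    linarith
  refine ⟨hyy, ?_⟩
  rw [Wxy_eq_Wyx]
  exact exists_neg_eigenvalue _ _ _ (by rwa [Wyy_eq])
end

section
/- Let V(ρ, τ, σ₁, σ₂) be the four-field potential with parameters R₁,…,R₆, h₀, h₂, t₁, t₂, t₃, f₁, f₃, f₅. With b_{σ₁} = b_{σ₂} = 1/4, b_ρ = 1/2, b_τ = 3/4 and the differential operator D = (1/(3√2))·ρ∂_ρ + (1/(2√2))·τ∂_τ + (1/(6√2))·(σ₁∂_{σ₁} + σ₂∂_{σ₂}), the following identity of functions on (0,∞)⁴ holds: 2·[ V + b_{σ₁}·σ₁∂_{σ₁}V + b_{σ₂}·σ₂∂_{σ₂}V + b_ρ·ρ∂_ρV + b_τ·τ∂_τV + D(D V) ] = −R₃·τ⁻²·ρ⁻¹·σ₁⁴·σ₂⁴. -/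
/-!
On the open orthant `V` is a linear combination of monomials `ρ^a τ^b σ₁^c σ₂^d`, and each of these
is a simultaneous eigenfunction of the operators `ρ∂_ρ`, `τ∂_τ`, `σ₁∂_{σ₁}`, `σ₂∂_{σ₂}`, with
eigenvalues `a, b, c, d`. With `x = 2a + 3b + c + d`, the operator `D` has eigenvalue `x / (6√2)`,
so the whole combination multiplies the monomial by
`1 + x/4 + x²/72 = (x + 6)(x + 12)/72`.
Every term of `V` has `x = -6` or `x = -12` and is annihilated, except the `R₃` term, which has
`x = 0` and is kept with factor `1`.

The eigenfunction property is `rD4_eq`, `tD4_eq`, `s1D4_eq`, `s2D4_eq`, combined in `Dop17_eq`;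
`V4_eq` is the expansion of `V` into monomials.
-/

/-- The four-field scalar potential `V(ρ, τ, σ₁, σ₂)` (with `M_p = 1`), with parameters
`R₁,…,R₆` (curvature terms), `h₀ = |H^(0)₁|²`, `h₂ = |H^(2)₁|²`, `t₁, t₂, t₃ = g_s T₁₀ᴵ`,
`f₁, f₃, f₅ = g_s²|F_q|²`:
`2·V = −τ⁻²ρ⁻¹·(R₁σ₁⁻⁸σ₂⁴ + R₂σ₁⁴σ₂⁻⁸ + R₃σ₁⁴σ₂⁴ + R₄σ₁⁻²σ₂⁻² + R₅σ₁⁴σ₂⁻² + R₆σ₁⁻²σ₂⁴)`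
`+ (1/2)τ⁻²ρ⁻³·(σ₁⁻⁶σ₂⁶·h₀ + σ₁⁶σ₂⁻⁶·h₂) − τ⁻³ρ^(−1/2)·(σ₁⁻⁴σ₂²·t₁ + σ₁²σ₂⁻⁴·t₂ + σ₁²σ₂²·t₃)/6`
`+ (1/2)τ⁻⁴·(ρ²(σ₁σ₂)⁻²·f₁ + f₃ + ρ⁻²(σ₁σ₂)²·f₅)`. -/
noncomputable def V4 (R1 R2 R3 R4 R5 R6 h0 h2 t1 t2 t3 f1 f3 f5 : ℝ)
    (ρ τ s1 s2 : ℝ) : ℝ :=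
  (1/2) * (-(τ ^ (-2 : ℝ)) * ρ ^ (-1 : ℝ) *
      (R1 * s1 ^ (-8 : ℝ) * s2 ^ (4 : ℝ) + R2 * s1 ^ (4 : ℝ) * s2 ^ (-8 : ℝ)
        + R3 * s1 ^ (4 : ℝ) * s2 ^ (4 : ℝ) + R4 * s1 ^ (-2 : ℝ) * s2 ^ (-2 : ℝ)
        + R5 * s1 ^ (4 : ℝ) * s2 ^ (-2 : ℝ) + R6 * s1 ^ (-2 : ℝ) * s2 ^ (4 : ℝ))
    + (1/2) * τ ^ (-2 : ℝ) * ρ ^ (-3 : ℝ) *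
        (s1 ^ (-6 : ℝ) * s2 ^ (6 : ℝ) * h0 + s1 ^ (6 : ℝ) * s2 ^ (-6 : ℝ) * h2)
    - τ ^ (-3 : ℝ) * ρ ^ (-(1/2) : ℝ) *
        (s1 ^ (-4 : ℝ) * s2 ^ (2 : ℝ) * t1 + s1 ^ (2 : ℝ) * s2 ^ (-4 : ℝ) * t2
          + s1 ^ (2 : ℝ) * s2 ^ (2 : ℝ) * t3) / 6
    + (1/2) * τ ^ (-4 : ℝ) *
        (ρ ^ (2 : ℝ) * (s1 * s2) ^ (-2 : ℝ) * f1 + f3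
          + ρ ^ (-2 : ℝ) * (s1 * s2) ^ (2 : ℝ) * f5))

/-- The operator `ρ ∂_ρ` on functions of `(ρ, τ, σ₁, σ₂)`. -/
noncomputable def rD4 (F : ℝ → ℝ → ℝ → ℝ → ℝ) (ρ τ s1 s2 : ℝ) : ℝ :=
  ρ * deriv (fun x => F x τ s1 s2) ρ

/-- The operator `τ ∂_τ` on functions of `(ρ, τ, σ₁, σ₂)`. -/
noncomputable def tD4 (F : ℝ → ℝ → ℝ → ℝ → ℝ) (ρ τ s1 s2 : ℝ) : ℝ :=
  τ * deriv (fun y => F ρ y s1 s2) τ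

/-- The operator `σ₁ ∂_{σ₁}` on functions of `(ρ, τ, σ₁, σ₂)`. -/
noncomputable def s1D4 (F : ℝ → ℝ → ℝ → ℝ → ℝ) (ρ τ s1 s2 : ℝ) : ℝ :=
  s1 * deriv (fun z => F ρ τ z s2) s1

/-- The operator `σ₂ ∂_{σ₂}` on functions of `(ρ, τ, σ₁, σ₂)`. -/
noncomputable def s2D4 (F : ℝ → ℝ → ℝ → ℝ → ℝ) (ρ τ s1 s2 : ℝ) : ℝ :=
  s2 * deriv (fun w => F ρ τ s1 w) s2

/-- The first-order operator
`D = (1/(3√2))·ρ∂_ρ + (1/(2√2))·τ∂_τ + (1/(6√2))·(σ₁∂_{σ₁} + σ₂∂_{σ₂})`. -/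
noncomputable def Dop17 (F : ℝ → ℝ → ℝ → ℝ → ℝ) (ρ τ s1 s2 : ℝ) : ℝ :=
  (1 / (3 * Real.sqrt 2)) * rD4 F ρ τ s1 s2
    + (1 / (2 * Real.sqrt 2)) * tD4 F ρ τ s1 s2
    + (1 / (6 * Real.sqrt 2)) * (s1D4 F ρ τ s1 s2 + s2D4 F ρ τ s1 s2)

/-- The generalized polynomial `∑ᵢ kᵢ ρ^(aᵢ) τ^(bᵢ) σ₁^(cᵢ) σ₂^(dᵢ)` with real exponents; the
14 indices match the 14 parameters of the potential. -/
noncomputable def monomialSum (a b c d k : Fin 14 → ℝ) (ρ τ s1 s2 : ℝ) : ℝ :=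
  ∑ i, k i * (ρ ^ a i * τ ^ b i * s1 ^ c i * s2 ^ d i)

/-- Equality of two functions on the open orthant `(0,∞)⁴`. -/
def EqOnOrthant (F G : ℝ → ℝ → ℝ → ℝ → ℝ) : Prop :=
  ∀ ρ τ s1 s2 : ℝ, 0 < ρ → 0 < τ → 0 < s1 → 0 < s2 → F ρ τ s1 s2 = G ρ τ s1 s2

/-- The Euler operator `x d/dx` in one variable multiplies each power by its exponent. The
hypothesis is only needed on `(0,∞)`, which is a neighbourhood of `x`. -/
lemma euler_sum (f : ℝ → ℝ) (k a : Fin 14 → ℝ)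
    (hf : ∀ x, 0 < x → f x = ∑ i, k i * x ^ a i) (x : ℝ) (hx : 0 < x) :
    x * deriv f x = ∑ i, a i * (k i * x ^ a i) := by
  have hev : f =ᶠ[nhds x] fun y => ∑ i, k i * y ^ a i := by
    filter_upwards [lt_mem_nhds hx] with y hy using hf y hy
  have hd : HasDerivAt (fun y : ℝ => ∑ i, k i * y ^ a i)
      (∑ i, k i * (a i * x ^ (a i - 1))) x :=
    HasDerivAt.fun_sum fun i _ => (Real.hasDerivAt_rpow_const (Or.inl hx.ne')).const_mul (k i)
  rw [hev.deriv_eq, hd.deriv, Finset.mul_sum]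
  refine Finset.sum_congr rfl fun i _ => ?_
  rw [Real.rpow_sub_one hx.ne']
  field_simp

section Eigen

variable {F : ℝ → ℝ → ℝ → ℝ → ℝ} {a b c d k : Fin 14 → ℝ}

lemma rD4_eq (h : EqOnOrthant F (monomialSum a b c d k)) :
    EqOnOrthant (rD4 F) (monomialSum a b c d fun i => a i * k i) := by
  intro ρ τ s1 s2 hρ hτ h1 h2
  have key := euler_sum (fun y => F y τ s1 s2)
    (fun i => k i * (τ ^ b i * s1 ^ c i * s2 ^ d i)) a
    (fun y hy => (h y τ s1 s2 hy hτ h1 h2).trans (Finset.sum_congr rfl fun i _ => by ring)) ρ hρ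
  exact key.trans (Finset.sum_congr rfl fun i _ => by ring)

lemma tD4_eq (h : EqOnOrthant F (monomialSum a b c d k)) :
    EqOnOrthant (tD4 F) (monomialSum a b c d fun i => b i * k i) := by
  intro ρ τ s1 s2 hρ hτ h1 h2
  have key := euler_sum (fun y => F ρ y s1 s2)
    (fun i => k i * (ρ ^ a i * s1 ^ c i * s2 ^ d i)) b
    (fun y hy => (h ρ y s1 s2 hρ hy h1 h2).trans (Finset.sum_congr rfl fun i _ => by ring)) τ hτ
  exact key.trans (Finset.sum_congr rfl fun i _ => by ring)

lemma s1D4_eq (h : EqOnOrthant F (monomialSum a b c d k)) :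
    EqOnOrthant (s1D4 F) (monomialSum a b c d fun i => c i * k i) := by
  intro ρ τ s1 s2 hρ hτ h1 h2
  have key := euler_sum (fun y => F ρ τ y s2)
    (fun i => k i * (ρ ^ a i * τ ^ b i * s2 ^ d i)) c
    (fun y hy => (h ρ τ y s2 hρ hτ hy h2).trans (Finset.sum_congr rfl fun i _ => by ring)) s1 h1
  exact key.trans (Finset.sum_congr rfl fun i _ => by ring)

lemma s2D4_eq (h : EqOnOrthant F (monomialSum a b c d k)) :
    EqOnOrthant (s2D4 F) (monomialSum a b c d fun i => d i * k i) := by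
  intro ρ τ s1 s2 hρ hτ h1 h2
  have key := euler_sum (fun y => F ρ τ s1 y)
    (fun i => k i * (ρ ^ a i * τ ^ b i * s1 ^ c i)) d
    (fun y hy => (h ρ τ s1 y hρ hτ h1 hy).trans (Finset.sum_congr rfl fun i _ => by ring)) s2 h2
  exact key.trans (Finset.sum_congr rfl fun i _ => by ring)

/-- The operator `D` acts on each monomial as the scalar `(2a + 3b + c + d) / (6√2)`. -/
lemma Dop17_eq (h : EqOnOrthant F (monomialSum a b c d k)) :
    EqOnOrthant (Dop17 F) (monomialSum a b c d
      fun i => (2 * a i + 3 * b i + c i + d i) / (6 * Real.sqrt 2) * k i) := by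
  intro ρ τ s1 s2 hρ hτ h1 h2
  unfold Dop17
  rw [rD4_eq h _ _ _ _ hρ hτ h1 h2, tD4_eq h _ _ _ _ hρ hτ h1 h2,
    s1D4_eq h _ _ _ _ hρ hτ h1 h2, s2D4_eq h _ _ _ _ hρ hτ h1 h2]
  simp only [monomialSum, Finset.mul_sum, ← Finset.sum_add_distrib]
  refine Finset.sum_congr rfl fun i _ => ?_
  field_simp
  ring

/-- The combination acts on each monomial as the scalar `(x + 6)(x + 12)/72`, where
`x = 2a + 3b + c + d`. -/
lemma combination_eq (h : EqOnOrthant F (monomialSum a b c d k)) {ρ τ s1 s2 : ℝ}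
    (hρ : 0 < ρ) (hτ : 0 < τ) (h1 : 0 < s1) (h2 : 0 < s2) :
    F ρ τ s1 s2 + (1/4) * s1D4 F ρ τ s1 s2 + (1/4) * s2D4 F ρ τ s1 s2
        + (1/2) * rD4 F ρ τ s1 s2 + (3/4) * tD4 F ρ τ s1 s2 + Dop17 (Dop17 F) ρ τ s1 s2
      = monomialSum a b c d (fun i => (2 * a i + 3 * b i + c i + d i + 6)
          * (2 * a i + 3 * b i + c i + d i + 12) / 72 * k i) ρ τ s1 s2 := by
  rw [h _ _ _ _ hρ hτ h1 h2, rD4_eq h _ _ _ _ hρ hτ h1 h2, tD4_eq h _ _ _ _ hρ hτ h1 h2,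
    s1D4_eq h _ _ _ _ hρ hτ h1 h2, s2D4_eq h _ _ _ _ hρ hτ h1 h2,
    Dop17_eq (Dop17_eq h) _ _ _ _ hρ hτ h1 h2]
  simp only [monomialSum, Finset.mul_sum, ← Finset.sum_add_distrib]
  refine Finset.sum_congr rfl fun i _ => ?_
  have hsq : ∀ x : ℝ, x / (6 * Real.sqrt 2) * (x / (6 * Real.sqrt 2) * k i)
      = x ^ 2 / 72 * k i := by
    intro x
    have h2 : Real.sqrt 2 ^ 2 = 2 := Real.sq_sqrt (by norm_num)
    field_simp
    rw [h2]
    ring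
  rw [hsq]
  ring

end Eigen

/-- Exponents of `ρ`; all four exponent tables are ordered as
`R₁, …, R₆, h₀, h₂, t₁, t₂, t₃, f₁, f₃, f₅`. -/
noncomputable def expRho : Fin 14 → ℝ :=
  ![-1, -1, -1, -1, -1, -1, -3, -3, -(1/2), -(1/2), -(1/2), 2, 0, -2]

/-- Exponents of `τ`. -/
noncomputable def expTau : Fin 14 → ℝ :=
  ![-2, -2, -2, -2, -2, -2, -2, -2, -3, -3, -3, -4, -4, -4]

/-- Exponents of `σ₁`. -/
noncomputable def expS1 : Fin 14 → ℝ :=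
  ![-8, 4, 4, -2, 4, -2, -6, 6, -4, 2, 2, -2, 0, 2]

/-- Exponents of `σ₂`. -/
noncomputable def expS2 : Fin 14 → ℝ :=
  ![4, -8, 4, -2, -2, 4, 6, -6, 2, -4, 2, -2, 0, 2]

lemma V4_eq (R1 R2 R3 R4 R5 R6 h0 h2 t1 t2 t3 f1 f3 f5 : ℝ) :
    EqOnOrthant (V4 R1 R2 R3 R4 R5 R6 h0 h2 t1 t2 t3 f1 f3 f5)
      (monomialSum expRho expTau expS1 expS2
        ![-R1/2, -R2/2, -R3/2, -R4/2, -R5/2, -R6/2, h0/4, h2/4, -t1/12, -t2/12, -t3/12,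
          f1/4, f3/4, f5/4]) := by
  intro ρ τ s1 s2 hρ hτ hs1 hs2
  simp only [V4, monomialSum, expRho, expTau, expS1, expS2, Fin.sum_univ_succ, Fin.sum_univ_zero,
    Matrix.cons_val_zero, Matrix.cons_val_succ, Real.rpow_zero, Real.mul_rpow hs1.le hs2.le]
  ring

/-- With `b_{σ₁} = b_{σ₂} = 1/4`, `b_ρ = 1/2`, `b_τ = 3/4` and the
operator `D` above, on `(0,∞)⁴` one has the identity
`2·[ V + b_{σ₁}σ₁∂_{σ₁}V + b_{σ₂}σ₂∂_{σ₂}V + b_ρρ∂_ρV + b_ττ∂_τV + D(DV) ]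
  = −R₃·τ⁻²·ρ⁻¹·σ₁⁴·σ₂⁴`. -/
theorem four_field_R3_combination (R1 R2 R3 R4 R5 R6 h0 h2 t1 t2 t3 f1 f3 f5 : ℝ) :
    ∀ ρ τ s1 s2 : ℝ, 0 < ρ → 0 < τ → 0 < s1 → 0 < s2 →
      2 * (V4 R1 R2 R3 R4 R5 R6 h0 h2 t1 t2 t3 f1 f3 f5 ρ τ s1 s2
        + (1/4) * s1D4 (V4 R1 R2 R3 R4 R5 R6 h0 h2 t1 t2 t3 f1 f3 f5) ρ τ s1 s2
        + (1/4) * s2D4 (V4 R1 R2 R3 R4 R5 R6 h0 h2 t1 t2 t3 f1 f3 f5) ρ τ s1 s2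
        + (1/2) * rD4 (V4 R1 R2 R3 R4 R5 R6 h0 h2 t1 t2 t3 f1 f3 f5) ρ τ s1 s2
        + (3/4) * tD4 (V4 R1 R2 R3 R4 R5 R6 h0 h2 t1 t2 t3 f1 f3 f5) ρ τ s1 s2
        + Dop17 (Dop17 (V4 R1 R2 R3 R4 R5 R6 h0 h2 t1 t2 t3 f1 f3 f5)) ρ τ s1 s2)
      = -R3 * τ ^ (-2 : ℝ) * ρ ^ (-1 : ℝ) * s1 ^ (4 : ℝ) * s2 ^ (4 : ℝ) := by
  intro ρ τ s1 s2 hρ hτ hs1 hs2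
  rw [combination_eq (V4_eq R1 R2 R3 R4 R5 R6 h0 h2 t1 t2 t3 f1 f3 f5) hρ hτ hs1 hs2]
  simp only [monomialSum, expRho, expTau, expS1, expS2, Fin.sum_univ_succ, Fin.sum_univ_zero,
    Matrix.cons_val_zero, Matrix.cons_val_succ]
  -- The numerical factors `(x + 6)(x + 12)/72` are evaluated by `ring`; only `R₃` survives.
  ring
end
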